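/- Let X be a Banach space without subspaces isomorphic to ℓ₁ and let (x_{n,m}) be a bounded double sequence in X. Suppose x** ∈ X** is a weak* limit point of every column (x_{n,m})_n. Then there exist strictly increasing index sequences (n(k)) and (m(k)) such that x_{n(k),m(k)} → x** in the weak* topology of X**. -/

import Mathlib

open Filter Topology

/-- A set is small if a game of shrinking it by oscillation conditions ends. -/
inductive OscSmall {K : Type*} (U : Ultrafilter ℕ) (g : ℕ → K → ℝ) (r s : ℝ) : Set K → Prop
  | empty : OscSmall U g r s ∅
  | plus (C : Set K) (B : Set ℕ) (hB : B ∈ U)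
      (h : ∀ n ∈ B, OscSmall U g r s (C ∩ {x | s ≤ g n x})) : OscSmall U g r s C
  | minus (C : Set K) (B : Set ℕ) (hB : B ∈ U)
      (h : ∀ n ∈ B, OscSmall U g r s (C ∩ {x | g n x ≤ r})) : OscSmall U g r s C

/-- A set is killed if intersecting with generic `g n ≤ r` conditions ends in the empty set. -/
inductive Killed {K : Type*} (U : Ultrafilter ℕ) (g : ℕ → K → ℝ) (r : ℝ) : Set K → Prop
  | empty : Killed U g r ∅
  | step (C : Set K) (B : Set ℕ) (hB : B ∈ U)
      (h : ∀ n ∈ B, Killed U g r (C ∩ {x | g n x ≤ r})) : Killed U g r C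

/-- No pair of levels admits an independent sequence. -/
def NonIndep {K : Type*} (g : ℕ → K → ℝ) : Prop :=
  ∀ r s : ℝ, r < s → ∀ a : ℕ → ℕ, ∃ p : ℕ → Prop, ∀ x : K,
    ¬ ∀ k, (p k → s ≤ g (a k) x) ∧ (¬ p k → g (a k) x ≤ r)

section
variable {K : Type*} {U : Ultrafilter ℕ} {g : ℕ → K → ℝ}

theorem not_oscSmall_step {r s : ℝ} {C : Set K} (h : ¬ OscSmall U g r s C) :
    ∀ᶠ n in (U : Filter ℕ), ¬ OscSmall U g r s (C ∩ {x | s ≤ g n x}) ∧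
      ¬ OscSmall U g r s (C ∩ {x | g n x ≤ r}) := by
  refine Filter.Eventually.and ?_ ?_
  · rw [Ultrafilter.eventually_not]
    intro h'
    exact h (.plus C _ h' (fun n hn => hn))
  · rw [Ultrafilter.eventually_not]
    intro h'
    exact h (.minus C _ h' (fun n hn => hn))

theorem not_oscSmall_list {r s : ℝ} (L : List (Set K)) (hL : ∀ C ∈ L, ¬ OscSmall U g r s C) :
    ∃ n, ∀ C ∈ L, ¬ OscSmall U g r s (C ∩ {x | s ≤ g n x}) ∧
      ¬ OscSmall U g r s (C ∩ {x | g n x ≤ r}) := by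
  have : ∀ᶠ n in (U : Filter ℕ), ∀ C ∈ L, ¬ OscSmall U g r s (C ∩ {x | s ≤ g n x}) ∧
      ¬ OscSmall U g r s (C ∩ {x | g n x ≤ r}) := by
    induction L with
    | nil => simp
    | cons D L ih =>
      have h1 := not_oscSmall_step (hL D (by simp))
      have h2 := ih (fun C hC => hL C (by simp [hC]))
      filter_upwards [h1, h2] with n h1 h2 C hC
      rcases List.mem_cons.1 hC with rfl | hC
      · exact h1
      · exact h2 C hC
  exact this.exists

theorem oscSmall_univ [TopologicalSpace K] [CompactSpace K] (hg : ∀ n, Continuous (g n))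
    (hN : NonIndep g) {r s : ℝ} (hrs : r < s) : OscSmall U g r s Set.univ := by
  classical
  by_contra hc
  let St := {L : List (Set K) // ∀ C ∈ L, ¬ OscSmall U g r s C}
  let pick : St → ℕ := fun L => (not_oscSmall_list L.1 L.2).choose
  have hpick : ∀ L : St, ∀ C ∈ L.1, ¬ OscSmall U g r s (C ∩ {x | s ≤ g (pick L) x}) ∧
      ¬ OscSmall U g r s (C ∩ {x | g (pick L) x ≤ r}) :=
    fun L => (not_oscSmall_list L.1 L.2).choose_spec
  let next : St → St := fun L =>
    ⟨L.1.map (fun C => C ∩ {x | s ≤ g (pick L) x}) ++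
      L.1.map (fun C => C ∩ {x | g (pick L) x ≤ r}), by
      intro C hC
      rcases List.mem_append.1 hC with hC | hC
      · obtain ⟨D, hD, rfl⟩ := List.mem_map.1 hC
        exact (hpick L D hD).1
      · obtain ⟨D, hD, rfl⟩ := List.mem_map.1 hC
        exact (hpick L D hD).2⟩
  let st : ℕ → St := fun k => Nat.rec ⟨[Set.univ], by simpa using hc⟩ (fun _ L => next L) k
  have hst : ∀ k, st (k + 1) = next (st k) := fun k => rfl
  obtain ⟨p, hp⟩ := hN r s hrs (fun k => pick (st k))
  let S : ℕ → Set K := fun k =>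
    {x | (p k → s ≤ g (pick (st k)) x) ∧ (¬ p k → g (pick (st k)) x ≤ r)}
  have hSc : ∀ k, IsClosed (S k) := by
    intro k
    by_cases h : p k
    · have : S k = {x | s ≤ g (pick (st k)) x} := by ext x; simp [S, h]
      rw [this]; exact isClosed_le continuous_const (hg _)
    · have : S k = {x | g (pick (st k)) x ≤ r} := by ext x; simp [S, h]
      rw [this]; exact isClosed_le (hg _) continuous_const
  have key : ∀ k, ∃ C ∈ (st k).1, C ⊆ {x | ∀ i < k, x ∈ S i} := by
    intro k
    induction k with
    | zero => exact ⟨Set.univ, by simp [st], by simp⟩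
    | succ k ih =>
      obtain ⟨C, hC, hCs⟩ := ih
      rw [hst]
      by_cases h : p k
      · refine ⟨C ∩ {x | s ≤ g (pick (st k)) x},
          List.mem_append_left _ (List.mem_map_of_mem hC), ?_⟩
        rintro x ⟨hx, hx'⟩ i hi
        rcases Nat.lt_succ_iff_lt_or_eq.1 hi with hi | rfl
        · exact hCs hx i hi
        · exact ⟨fun _ => hx', fun h' => absurd h h'⟩
      · refine ⟨C ∩ {x | g (pick (st k)) x ≤ r},
          List.mem_append_right _ (List.mem_map_of_mem hC), ?_⟩
        rintro x ⟨hx, hx'⟩ i hi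
        rcases Nat.lt_succ_iff_lt_or_eq.1 hi with hi | rfl
        · exact hCs hx i hi
        · exact ⟨fun h' => absurd h' h, fun _ => hx'⟩
  have hcl : ∀ k, IsClosed {x | ∀ i < k, x ∈ S i} := by
    intro k
    have : {x | ∀ i < k, x ∈ S i} = ⋂ i, ⋂ (_ : i < k), S i := by ext; simp
    rw [this]
    exact isClosed_iInter fun i => isClosed_iInter fun _ => hSc i
  have hne := IsCompact.nonempty_iInter_of_sequence_nonempty_isCompact_isClosed
    (fun k => {x | ∀ i < k, x ∈ S i})
    (fun k x hx i hi => hx i (by omega))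
    (fun k => by
      obtain ⟨C, hC, hCs⟩ := key k
      refine Set.Nonempty.mono hCs ?_
      rw [Set.nonempty_iff_ne_empty]
      rintro rfl
      exact (st k).2 _ hC .empty)
    (hcl 0).isCompact hcl
  obtain ⟨x, hx⟩ := hne
  refine hp x (fun k => ?_)
  exact (Set.mem_iInter.1 hx (k + 1)) k (Nat.lt_succ_self k)

theorem OscSmall.mono {r s : ℝ} {C D : Set K} (h : OscSmall U g r s C) (hD : D ⊆ C) :
    OscSmall U g r s D := by
  induction h generalizing D with
  | empty => rw [Set.subset_empty_iff.1 hD]; exact .empty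
  | plus C B hB _ ih =>
    exact .plus D B hB fun n hn => ih n hn (Set.inter_subset_inter_left _ hD)
  | minus C B hB _ ih =>
    exact .minus D B hB fun n hn => ih n hn (Set.inter_subset_inter_left _ hD)

theorem Killed.mono {r : ℝ} {C D : Set K} (h : Killed U g r C) (hD : D ⊆ C) :
    Killed U g r D := by
  induction h generalizing D with
  | empty => rw [Set.subset_empty_iff.1 hD]; exact .empty
  | step C B hB _ ih =>
    exact .step D B hB fun n hn => ih n hn (Set.inter_subset_inter_left _ hD)

theorem Killed.union {r : ℝ} {C D : Set K} (h : Killed U g r C) (hD : Killed U g r D) :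
    Killed U g r (C ∪ D) := by
  induction h generalizing D with
  | empty => simpa using hD
  | step C B hB _ ih =>
    refine .step _ B hB fun n hn => ?_
    rw [Set.union_inter_distrib_right]
    exact ih n hn (hD.mono Set.inter_subset_left)

theorem Killed.biUnion {r : ℝ} (t : Finset ℕ) (C : ℕ → Set K) (h : ∀ n ∈ t, Killed U g r (C n)) :
    Killed U g r (⋃ n ∈ t, C n) := by
  classical
  induction t using Finset.induction_on with
  | empty => simpa using Killed.empty
  | insert a t ha ih =>
    rw [Finset.set_biUnion_insert]
    exact (h a (by simp)).union (ih fun n hn => h n (by simp [hn]))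

theorem killed_of_closed [TopologicalSpace K] [CompactSpace K] (hg : ∀ n, Continuous (g n))
    {f : K → ℝ} (hf : ∀ x, Tendsto (fun n => g n x) U (𝓝 (f x))) {r s : ℝ}
    {C : Set K} (hS : OscSmall U g r s C) (hC : IsClosed C) (hfC : ∀ x ∈ C, s < f x) :
    Killed U g r C := by
  induction hS with
  | empty => exact .empty
  | minus C B hB _ ih =>
    exact .step C B hB fun n hn => ih n hn
      (hC.inter (isClosed_le (hg n) continuous_const)) (fun x hx => hfC x hx.1)
  | plus C B hB _ ih =>
    have hk : ∀ n ∈ B, Killed U g r (C ∩ {x | s ≤ g n x}) := fun n hn => ih n hn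
      (hC.inter (isClosed_le continuous_const (hg n))) (fun x hx => hfC x hx.1)
    by_contra hnk
    have hne : (C ∩ ⋂ n : B, {x | g n x ≤ s}).Nonempty := by
      refine hC.isCompact.inter_iInter_nonempty _
        (fun n => isClosed_le (hg n) continuous_const) ?_
      intro t
      by_contra hemp
      rw [Set.not_nonempty_iff_eq_empty] at hemp
      apply hnk
      refine (Killed.biUnion (t.map (Function.Embedding.subtype _))
        (fun n => C ∩ {x | s ≤ g n x}) ?_).mono ?_
      · intro n hn
        obtain ⟨m, _, rfl⟩ := Finset.mem_map.1 hn
        exact hk _ m.2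
      · intro x hx
        by_contra hx'
        have : x ∈ (C ∩ ⋂ n ∈ t, {x | g n x ≤ s}) := by
          refine ⟨hx, ?_⟩
          simp only [Set.mem_iInter]
          intro n hn
          by_contra hlt
          apply hx'
          simp only [Set.mem_iUnion]
          exact ⟨n, Finset.mem_map.2 ⟨n, hn, rfl⟩, hx, le_of_lt (not_le.1 (show ¬ g n x ≤ s from hlt))⟩
        rw [hemp] at this
        exact this
    obtain ⟨x, hx, hx'⟩ := hne
    have : f x ≤ s := by
      refine le_of_tendsto (hf x) ?_
      filter_upwards [hB] with n hn
      exact Set.mem_iInter.1 hx' ⟨n, hn⟩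
    exact absurd (hfC x hx) (not_lt.2 this)

theorem fsigma_sep [TopologicalSpace K] (hg : ∀ n, Continuous (g n))
    {f : K → ℝ} (hf : ∀ x, Tendsto (fun n => g n x) U (𝓝 (f x))) {r s : ℝ}
    {C : Set K} (hS : OscSmall U g r s C) (hC : IsClosed C) :
    ∃ F : Set (Set K), F.Countable ∧ (∀ D ∈ F, IsClosed D ∧ ∀ x ∈ D, r ≤ f x) ∧
      ∀ x ∈ C, s < f x → ∃ D ∈ F, x ∈ D := by
  classical
  induction hS with
  | empty => exact ⟨∅, by simp, by simp, by simp⟩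
  | plus C B hB _ ih =>
    have := fun n : B => ih n n.2 (hC.inter (isClosed_le continuous_const (hg n)))
    choose F h1 h2 h3 using this
    refine ⟨⋃ n, F n, Set.countable_iUnion h1, ?_, ?_⟩
    · intro D hD
      obtain ⟨n, hn⟩ := Set.mem_iUnion.1 hD
      exact h2 n D hn
    · intro x hx hsx
      have : ∀ᶠ n in (U : Filter ℕ), s < g n x := (hf x).eventually (lt_mem_nhds hsx)
      obtain ⟨n, hn, hnB⟩ := (this.and hB).exists
      obtain ⟨D, hD, hxD⟩ := h3 ⟨n, hnB⟩ x ⟨hx, hn.le⟩ hsx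
      exact ⟨D, Set.mem_iUnion.2 ⟨_, hD⟩, hxD⟩
  | minus C B hB _ ih =>
    have := fun n : B => ih n n.2 (hC.inter (isClosed_le (hg n) continuous_const))
    choose F h1 h2 h3 using this
    refine ⟨insert (⋂ n : B, {x | r ≤ g n x}) (⋃ n, F n),
      (Set.countable_iUnion h1).insert _, ?_, ?_⟩
    · intro D hD
      rcases Set.mem_insert_iff.1 hD with rfl | hD
      · refine ⟨isClosed_iInter fun n => isClosed_le continuous_const (hg n), fun x hx => ?_⟩
        refine ge_of_tendsto (hf x) ?_
        filter_upwards [hB] with n hn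
        exact Set.mem_iInter.1 hx ⟨n, hn⟩
      · obtain ⟨n, hn⟩ := Set.mem_iUnion.1 hD
        exact h2 n D hn
    · intro x hx hsx
      by_cases h : ∃ n : B, g n x ≤ r
      · obtain ⟨n, hn⟩ := h
        obtain ⟨D, hD, hxD⟩ := h3 n x ⟨hx, hn⟩ hsx
        exact ⟨D, Set.mem_insert_of_mem _ (Set.mem_iUnion.2 ⟨_, hD⟩), hxD⟩
      · push Not at h
        exact ⟨_, Set.mem_insert _ _, Set.mem_iInter.2 fun n => (h n).le⟩

/-- A strategy whose branches escape `C`. -/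
def Strat (U : Ultrafilter ℕ) (g : ℕ → K → ℝ) (r : ℝ) (C : Set K) (G : ℕ → Set ℕ) : Prop :=
  Antitone G ∧ (∀ n, G n ∈ U) ∧ ∀ a : ℕ → ℕ, StrictMono a → a 0 ∈ G 0 →
    (∀ k, a (k + 1) ∈ G (a k)) → ∀ x ∈ C, ¬ ∀ k, g (a k) x ≤ r

theorem Killed.strat {r : ℝ} {C : Set K} (h : Killed U g r C) : ∃ G, Strat U g r C G := by
  induction h with
  | empty => exact ⟨fun _ => Set.univ, antitone_const, fun _ => Filter.univ_mem, by simp⟩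
  | step C B hB _ ih =>
    choose! G hA hU hG using ih
    refine ⟨fun m => {i | i ∈ B ∧ ∀ n ≤ m, n ∈ B → i ∈ G n m}, ?_, ?_, ?_⟩
    · rintro m m' hm i ⟨hi, hi'⟩
      exact ⟨hi, fun n hn hnB => hA n hnB hm (hi' n (hn.trans hm) hnB)⟩
    · intro m
      refine Filter.inter_mem hB ?_
      change ∀ᶠ i in (U : Filter ℕ), ∀ n ≤ m, n ∈ B → i ∈ G n m
      refine (Filter.eventually_all_finite (Set.finite_Iic m)).2 ?_
      intro n _
      by_cases hn : n ∈ B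
      · filter_upwards [hU n hn m] with i hi _ using hi
      · exact Filter.Eventually.of_forall fun i h => absurd h hn
    · intro a ha h0 hs x hx hall
      have hB0 : a 0 ∈ B := h0.1
      refine hG (a 0) hB0 (fun k => a (k + 1)) (fun i j hij => ha (by omega)) ?_ ?_ x
        ⟨hx, hall 0⟩ (fun k => hall _)
      · exact hA _ hB0 (Nat.zero_le _) ((hs 0).2 (a 0) le_rfl hB0)
      · intro k
        exact (hs (k + 1)).2 (a 0) (ha.monotone (Nat.zero_le _)) hB0

/-- Countably many requirements taking care of the lower bound. -/
theorem requirements [TopologicalSpace K] [CompactSpace K] (hg : ∀ n, Continuous (g n))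
    (hN : NonIndep g) {f : K → ℝ} (hf : ∀ x, Tendsto (fun n => g n x) U (𝓝 (f x))) :
    ∃ (R : Set (ℝ × Set K)), R.Countable ∧ (∀ q ∈ R, ∃ G, Strat U g q.1 q.2 G) ∧
      ∀ x, ∀ b < f x, ∃ q ∈ R, b < q.1 ∧ x ∈ q.2 := by
  have h : ∀ p : ℚ × ℚ, p.1 < p.2 → ∃ F : Set (Set K), F.Countable ∧
      (∀ D ∈ F, Killed U g (p.1 : ℝ) D) ∧ ∀ x, (p.2 : ℝ) < f x → ∃ D ∈ F, x ∈ D := by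
    rintro ⟨r, s⟩ hrs
    have hrs' : (r : ℝ) < s := by exact_mod_cast hrs
    obtain ⟨t, hrt, hts⟩ := exists_between hrs'
    obtain ⟨t', hrt', htt'⟩ := exists_between hrt
    obtain ⟨F, h1, h2, h3⟩ := fsigma_sep hg hf (oscSmall_univ (U := U) hg hN hts) isClosed_univ
    refine ⟨F, h1, fun D hD => ?_, fun x hx => h3 x trivial hx⟩
    exact killed_of_closed hg hf ((oscSmall_univ (U := U) hg hN hrt').mono (Set.subset_univ D))
      (h2 D hD).1 (fun x hx => htt'.trans_le ((h2 D hD).2 x hx))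
  choose! F h1 h2 h3 using h
  refine ⟨⋃ p : {p : ℚ × ℚ // p.1 < p.2}, (fun D => ((p.1.1 : ℝ), D)) '' F p.1,
    Set.countable_iUnion fun p => (h1 p.1 p.2).image _, ?_, ?_⟩
  · intro q hq
    obtain ⟨p, D, hD, rfl⟩ := Set.mem_iUnion.1 hq
    exact (h2 p.1 p.2 D hD).strat
  · intro x b hb
    obtain ⟨r, hbr, hr⟩ := exists_rat_btwn hb
    obtain ⟨s, hrs, hs⟩ := exists_rat_btwn hr
    have hrs' : r < s := by exact_mod_cast hrs
    obtain ⟨D, hD, hx⟩ := h3 (r, s) hrs' x hs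
    exact ⟨(r, D), Set.mem_iUnion.2 ⟨⟨(r, s), hrs'⟩, D, hD, rfl⟩, hbr, hx⟩

theorem diagonal (E : ℕ → Set ℕ) (hE : ∀ n, E n ∈ U) (hU : ∀ n, Set.Ioi n ∈ U)
    {ι : Type*} [Countable ι] (G : ι → ℕ → Set ℕ) (hA : ∀ i, Antitone (G i))
    (hG : ∀ i n, G i n ∈ U) :
    ∃ a : ℕ → ℕ, StrictMono a ∧ (∀ k, a (k + 1) ∈ E (a k)) ∧
      ∀ i, ∃ j, (∀ k ≥ j, a k ∈ G i 0) ∧ ∀ k ≥ j, ∀ l > k, a l ∈ G i (a k) := by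
  classical
  obtain ⟨e, he⟩ := exists_injective_nat ι
  have hex : ∀ m, ∃ n, n ∈ E m ∧ m < n ∧ ∀ i, e i ≤ m → n ∈ G i m := by
    intro m
    have h3 : ∀ᶠ n in (U : Filter ℕ), ∀ i ∈ {i | e i ≤ m}, n ∈ G i m := by
      refine (Filter.eventually_all_finite ?_).2 fun i _ => hG i m
      exact (Set.finite_Iic m).preimage he.injOn
    obtain ⟨n, ⟨h1, h2⟩, h3⟩ := ((Filter.Eventually.and (hE m) (hU m)).and h3).exists
    exact ⟨n, h1, h2, h3⟩
  choose nx h1 h2 h3 using hex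
  let a : ℕ → ℕ := fun k => Nat.rec 0 (fun _ m => nx m) k
  have has : ∀ k, a (k + 1) = nx (a k) := fun k => rfl
  have ha : StrictMono a := strictMono_nat_of_lt_succ fun k => by rw [has]; exact h2 _
  have key : ∀ i k, e i ≤ k → ∀ l > k, a l ∈ G i (a k) := by
    intro i k hk l hl
    obtain ⟨l, rfl⟩ : ∃ l', l = l' + 1 := ⟨l - 1, by omega⟩
    rw [has]
    have hkl : k ≤ l := by omega
    exact hA i (ha.monotone hkl) (h3 (a l) i ((hk.trans hkl).trans ha.le_apply))
  refine ⟨a, ha, fun k => by rw [has]; exact h1 _, fun i => ⟨e i + 1, ?_, ?_⟩⟩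
  · intro k hk
    exact hA i (Nat.zero_le _) (key i (e i) le_rfl k (by omega))
  · intro k hk
    exact key i k (by omega)

theorem strat_eventually {r : ℝ} {C : Set K} {G : ℕ → Set ℕ} (h : Strat U g r C G)
    {a : ℕ → ℕ} (ha : StrictMono a) {j : ℕ} (h0 : ∀ k ≥ j, a k ∈ G 0)
    (h1 : ∀ k ≥ j, ∀ l > k, a l ∈ G (a k)) {x : K} (hx : x ∈ C) :
    ∀ᶠ k in atTop, r < g (a k) x := by
  by_contra hc
  have hf : ∃ᶠ k in atTop, g (a (k + j)) x ≤ r := by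
    have h2 : ∃ᶠ k in atTop, g (a k) x ≤ r := by
      simpa [Filter.Frequently] using hc
    rw [Filter.frequently_atTop] at h2 ⊢
    intro N
    obtain ⟨b, hb, hb'⟩ := h2 (N + j)
    refine ⟨b - j, by omega, ?_⟩
    rwa [Nat.sub_add_cancel (by omega)]
  obtain ⟨φ, hφ, hall⟩ := Filter.extraction_of_frequently_atTop hf
  refine h.2.2 (fun k => a (φ k + j)) ?_ (h0 _ (by omega)) ?_ x hx hall
  · intro k l hkl
    have := hφ hkl
    exact ha (by omega)
  · intro k
    have := hφ (Nat.lt_succ_self k)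
    exact h1 _ (by omega) _ (by simp only [Nat.succ_eq_add_one] at this; omega)

theorem NonIndep.neg (h : NonIndep g) : NonIndep (fun n x => - g n x) := by
  intro r s hrs a
  obtain ⟨p, hp⟩ := h (-s) (-r) (by linarith) a
  refine ⟨fun k => ¬ p k, fun x hx => hp x fun k => ⟨fun hk => ?_, fun hk => ?_⟩⟩
  · have := (hx k).2 (not_not.2 hk)
    linarith
  · have := (hx k).1 hk
    linarith

theorem exists_seq [TopologicalSpace K] [CompactSpace K] (hg : ∀ n, Continuous (g n))
    (hN : NonIndep g) {f : K → ℝ} (hf : ∀ x, Tendsto (fun n => g n x) U (𝓝 (f x)))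
    (E : ℕ → Set ℕ) (hE : ∀ n, E n ∈ U) (hU : ∀ n, Set.Ioi n ∈ U) :
    ∃ a : ℕ → ℕ, (∀ k, a (k + 1) ∈ E (a k)) ∧
      ∀ x, Tendsto (fun k => g (a k) x) atTop (𝓝 (f x)) := by
  obtain ⟨R, hR1, hR2, hR3⟩ := requirements hg hN hf
  obtain ⟨Q, hQ1, hQ2, hQ3⟩ := requirements (U := U) (fun n => (hg n).neg) hN.neg
    (fun x => (hf x).neg)
  choose G hG using hR2
  choose H hH using hQ2
  have := hR1.to_subtype
  have := hQ1.to_subtype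
  obtain ⟨a, ha, haE, hd⟩ := diagonal (U := U) E hE hU (ι := R ⊕ Q)
    (Sum.elim (fun q => G q.1 q.2) (fun q => H q.1 q.2))
    (by rintro (q | q); exacts [(hG _ _).1, (hH _ _).1])
    (by rintro (q | q); exacts [(hG _ _).2.1, (hH _ _).2.1])
  refine ⟨a, haE, fun x => tendsto_order.2 ⟨fun b hb => ?_, fun b hb => ?_⟩⟩
  · obtain ⟨q, hq, hbq, hxq⟩ := hR3 x b hb
    obtain ⟨j, h0, h1⟩ := hd (Sum.inl ⟨q, hq⟩)
    filter_upwards [strat_eventually (hG q hq) ha h0 h1 hxq] with k hk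
    exact hbq.trans hk
  · obtain ⟨q, hq, hbq, hxq⟩ := hQ3 x (-b) (by linarith)
    obtain ⟨j, h0, h1⟩ := hd (Sum.inr ⟨q, hq⟩)
    filter_upwards [strat_eventually (hH q hq) ha h0 h1 hxq] with k hk
    have hk' : q.1 < - g (a k) x := hk
    linarith
end

/-- A uniform lower `ℓ₁` estimate gives an isomorphic copy of `ℓ₁`. -/
theorem l1_embed {X : Type*} [NormedAddCommGroup X] [NormedSpace ℝ X] [CompleteSpace X]
    (y : ℕ → X) (C : ℝ) (hC : ∀ n, ‖y n‖ ≤ C) (r s : ℝ) (hrs : r < s)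
    (h : ∀ p : ℕ → Prop, ∃ φ : X →L[ℝ] ℝ, ‖φ‖ ≤ 1 ∧
      ∀ k, (p k → s ≤ φ (y k)) ∧ (¬ p k → φ (y k) ≤ r)) :
    ∃ (f : lp (fun _ : ℕ => ℝ) 1 →L[ℝ] X) (c : ℝ), 0 < c ∧ ∀ v, c * ‖v‖ ≤ ‖f v‖ := by
  have hsum : ∀ v : lp (fun _ : ℕ => ℝ) 1, HasSum (fun n => |v n|) ‖v‖ := by
    intro v
    have := lp.hasSum_norm (p := 1) (by simp) v
    simpa using this
  have hs1 : ∀ v : lp (fun _ : ℕ => ℝ) 1, Summable (fun n => ‖v n • y n‖) := by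
    intro v
    refine Summable.of_nonneg_of_le (fun _ => norm_nonneg _) (fun n => ?_)
      ((hsum v).summable.mul_right C)
    rw [norm_smul, Real.norm_eq_abs]
    exact mul_le_mul_of_nonneg_left (hC n) (abs_nonneg _)
  have hs : ∀ v : lp (fun _ : ℕ => ℝ) 1, Summable (fun n => v n • y n) := fun v => (hs1 v).of_norm
  let f₀ : lp (fun _ : ℕ => ℝ) 1 →ₗ[ℝ] X :=
    { toFun := fun v => ∑' n, v n • y n
      map_add' := by
        intro v w
        rw [← (hs v).tsum_add (hs w)]
        refine tsum_congr fun n => ?_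
        rw [lp.coeFn_add, Pi.add_apply, add_smul]
      map_smul' := by
        intro c v
        rw [RingHom.id_apply, ← (hs v).tsum_const_smul c]
        refine tsum_congr fun n => ?_
        rw [lp.coeFn_smul, Pi.smul_apply, smul_assoc] }
  let f := f₀.mkContinuous C (by
    intro v
    have h1 : ‖∑' n, v n • y n‖ ≤ ∑' n, ‖v n • y n‖ := norm_tsum_le_tsum_norm (hs1 v)
    have h2 : ∑' n, ‖v n • y n‖ ≤ ∑' n, |v n| * C := by
      refine (hs1 v).tsum_le_tsum (fun n => ?_) ((hsum v).summable.mul_right C)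
      rw [norm_smul, Real.norm_eq_abs]
      exact mul_le_mul_of_nonneg_left (hC n) (abs_nonneg _)
    rw [((hsum v).mul_right C).tsum_eq, mul_comm] at h2
    exact h1.trans h2)
  refine ⟨f, (s - r) / 2, by linarith, fun v => ?_⟩
  obtain ⟨φ, hφ, hφ'⟩ := h (fun k => 0 ≤ v k)
  obtain ⟨ψ, hψ, hψ'⟩ := h (fun k => ¬ 0 ≤ v k)
  have hfv : HasSum (fun n => v n • y n) (f v) := (hs v).hasSum
  have h1 : HasSum (fun n => (φ - ψ) (v n • y n)) ((φ - ψ) (f v)) := (φ - ψ).hasSum hfv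
  have h2 : ‖v‖ * (s - r) ≤ (φ - ψ) (f v) := by
    refine hasSum_le (fun n => ?_) ((hsum v).mul_right (s - r)) h1
    simp only [map_smul, sub_apply, smul_eq_mul]
    by_cases hv : 0 ≤ v n
    · have a1 := (hφ' n).1 hv
      have a2 := (hψ' n).2 (not_not.2 hv)
      rw [abs_of_nonneg hv]
      nlinarith
    · have a1 := (hφ' n).2 hv
      have a2 := (hψ' n).1 hv
      have hv' : v n < 0 := not_le.1 hv
      rw [abs_of_neg hv']
      nlinarith
  have h3 : (φ - ψ) (f v) ≤ 2 * ‖f v‖ := by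
    refine (le_abs_self _).trans ?_
    rw [← Real.norm_eq_abs]
    refine ((φ - ψ).le_opNorm _).trans ?_
    refine mul_le_mul_of_nonneg_right ?_ (norm_nonneg _)
    exact (norm_sub_le _ _).trans (by linarith)
  linarith

/-- Let `X` be a Banach space containing no isomorphic copy of `ℓ₁`, `(x_{n,m})` a bounded
double sequence in `X`, and `x** ∈ X**` a weak* limit point of every column `(x_{n,m})ₙ`.
Then there are strictly increasing sequences `(n(k))`, `(m(k))` with
`x_{n(k),m(k)} → x**` in the weak* topology of `X**`. -/
theorem stmt_14 {X : Type*} [NormedAddCommGroup X] [NormedSpace ℝ X] [CompleteSpace X]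
    (hl1 : ¬ ∃ (f : lp (fun _ : ℕ => ℝ) 1 →L[ℝ] X) (c : ℝ), 0 < c ∧ ∀ v, c * ‖v‖ ≤ ‖f v‖)
    (x : ℕ → ℕ → X) (C : ℝ) (hbdd : ∀ n m, ‖x n m‖ ≤ C)
    (x'' : (X →L[ℝ] ℝ) →L[ℝ] ℝ)
    (hcluster : ∀ m : ℕ, ∀ F : Finset (X →L[ℝ] ℝ), ∀ ε > (0 : ℝ), ∀ N : ℕ,
      ∃ n ≥ N, ∀ f ∈ F, |x'' f - f (x n m)| < ε) :
    ∃ nk mk : ℕ → ℕ, StrictMono nk ∧ StrictMono mk ∧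
      ∀ f : X →L[ℝ] ℝ,
        Filter.Tendsto (fun k => f (x (nk k) (mk k))) Filter.atTop (nhds (x'' f)) := by
  classical
  -- the filter of neighbourhoods of the cluster point
  let A : Finset (X →L[ℝ] ℝ) × ℕ → Set ℕ := fun q =>
    {i | q.2 ≤ i.unpair.1 ∧ q.2 ≤ i.unpair.2 ∧
      ∀ f ∈ q.1, |x'' f - f (x i.unpair.1 i.unpair.2)| < 1 / ((q.2 : ℝ) + 1)}
  have hAne : ∀ q, (A q).Nonempty := by
    rintro ⟨F, N⟩
    obtain ⟨n, hn, h⟩ := hcluster N F (1 / ((N : ℝ) + 1)) (by positivity) N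
    refine ⟨Nat.pair n N, ?_⟩
    simpa [A, -one_div] using ⟨hn, h⟩
  have hAanti : Antitone A := by
    rintro ⟨F, N⟩ ⟨F', N'⟩ ⟨hF, hN⟩ i ⟨h1, h2, h3⟩
    refine ⟨hN.trans h1, hN.trans h2, fun f hf => (h3 f (hF hf)).trans_le ?_⟩
    have : (N : ℝ) ≤ N' := by exact_mod_cast hN
    exact one_div_le_one_div_of_le (by positivity) (by simpa using this)
  have hne : (⨅ q, 𝓟 (A q)).NeBot := by
    refine Filter.iInf_neBot_of_directed' ?_ fun q => Filter.principal_neBot_iff.2 (hAne q)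
    intro q q'
    exact ⟨q ⊔ q', Filter.principal_mono.2 (hAanti le_sup_left),
      Filter.principal_mono.2 (hAanti le_sup_right)⟩
  let U : Ultrafilter ℕ := Ultrafilter.of (⨅ q, 𝓟 (A q))
  have hUA : ∀ q, A q ∈ U := fun q =>
    Ultrafilter.of_le _ (Filter.mem_iInf_of_mem q (Filter.mem_principal_self _))
  let y : ℕ → X := fun i => x i.unpair.1 i.unpair.2
  have hlim : ∀ f : X →L[ℝ] ℝ, Tendsto (fun i => f (y i)) U (𝓝 (x'' f)) := by
    intro f
    rw [Metric.tendsto_nhds]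
    intro ε hε
    obtain ⟨N, hN⟩ := exists_nat_one_div_lt hε
    filter_upwards [hUA ({f}, N)] with i hi
    rw [Real.dist_eq, abs_sub_comm]
    exact (hi.2.2 f (by simp)).trans hN
  let Kset : Set (WeakDual ℝ X) := WeakDual.toStrongDual ⁻¹' Metric.closedBall 0 1
  have hK : IsCompact Kset := WeakDual.isCompact_closedBall 0 1
  have : CompactSpace Kset := isCompact_iff_compactSpace.1 hK
  let g : ℕ → Kset → ℝ := fun i φ => φ.1 (y i)
  have hg : ∀ i, Continuous (g i) := fun i =>
    (WeakDual.eval_continuous (y i)).comp continuous_subtype_val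
  have hNI : NonIndep g := by
    intro r s hrs a
    by_contra hcon
    push Not at hcon
    refine hl1 (l1_embed (fun k => y (a k)) C (fun k => hbdd _ _) r s hrs ?_)
    intro p
    obtain ⟨φ, hφ⟩ := hcon p
    refine ⟨WeakDual.toStrongDual φ.1, mem_closedBall_zero_iff.1 φ.2, fun k => ?_⟩
    exact ⟨(hφ k).1, fun h => (hφ k).2 h⟩
  obtain ⟨a, haE, ha⟩ := exists_seq (U := U) hg hNI
    (f := fun φ => x'' (WeakDual.toStrongDual φ.1)) (fun φ => hlim (WeakDual.toStrongDual φ.1))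
    (fun m => {i | m.unpair.1 < i.unpair.1 ∧ m.unpair.2 < i.unpair.2})
    (fun m => by
      filter_upwards [hUA (∅, m + 1)] with i hi
      have h1 := Nat.unpair_left_le m
      have h2 := Nat.unpair_right_le m
      have h3 := hi.1
      have h4 := hi.2.1
      simp only at h3 h4
      exact ⟨by omega, by omega⟩)
    (fun m => by
      filter_upwards [hUA (∅, m + 1)] with i hi
      have h1 := Nat.unpair_left_le i
      have h3 := hi.1
      simp only at h3
      exact Set.mem_Ioi.2 (by omega))
  refine ⟨fun k => (a k).unpair.1, fun k => (a k).unpair.2,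
    strictMono_nat_of_lt_succ fun k => (haE k).1,
    strictMono_nat_of_lt_succ fun k => (haE k).2, fun f => ?_⟩
  -- rescale `f` into the unit ball
  have hpos : (0 : ℝ) < ‖f‖ + 1 := by positivity
  let φ : X →L[ℝ] ℝ := (‖f‖ + 1)⁻¹ • f
  have hφ : ‖φ‖ ≤ 1 := by
    rw [norm_smul, norm_inv, Real.norm_of_nonneg hpos.le, inv_mul_le_iff₀ hpos]
    linarith
  have hfφ : f = (‖f‖ + 1) • φ := by
    rw [smul_smul, mul_inv_cancel₀ hpos.ne', one_smul]
  have hmem : StrongDual.toWeakDual φ ∈ Kset := by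
    simpa [Kset] using hφ
  have h := (ha ⟨StrongDual.toWeakDual φ, hmem⟩).const_mul (‖f‖ + 1)
  have e1 : x'' f = (‖f‖ + 1) * x'' φ := by
    conv_lhs => rw [hfφ]
    rw [map_smul, smul_eq_mul]
  have e2 : ∀ z, f z = (‖f‖ + 1) * φ z := by
    intro z
    conv_lhs => rw [hfφ]
    rfl
  rw [e1]
  simp only [e2]
  exact h
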